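/- The following three conditions are equivalent: (a) there is a constant c such that for all n and all binary strings x of length n, K(x) − K(n) ≤ 2·(C(x) − C(n)) + c; (b) for each constant c' there is a constant d' such that for all n and all binary strings x of length n, if C(x) − C(n) ≤ c' then K(x) − K(n) ≤ d'; (c) there is a constant c'' such that K(C(n) ∣ n, K(n)) ≤ c'' for all n. -/

import Mathlib

open MeasureTheory Filter

/-- Cantor space: the space of infinite binary sequences. -/
abbrev Cantor : Type := ℕ → Bool

/-- Finite binary strings. -/
abbrev BStr : Type := List Bool

/-- The cylinder set of sequences extending the string `x`. -/
def cyl (x : BStr) : Set Cantor := {Z | ∀ i : Fin x.length, Z i.1 = x.get i}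

/-- The string of the first `n` bits of `Z`. -/
def seg (Z : Cantor) (n : ℕ) : BStr := List.ofFn fun i : Fin n => Z i.1

/-- `lam` is the uniform (fair-coin product) measure: every cylinder `[x]`
has measure `2^{-|x|}`. -/
def IsUniform (lam : Measure Cantor) : Prop :=
  ∀ x : BStr, lam (cyl x) = (2 : ENNReal)⁻¹ ^ x.length

/-- `(G_m)` is a Martin-Löf test with respect to the measure `ρ`:
the sets `G_m` are uniformly effectively open and `ρ (G_m) ≤ 2^{-m}`. -/
def IsMLTest (ρ : Measure Cantor) (G : ℕ → Set Cantor) : Prop :=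
  (∃ σ : ℕ → ℕ → BStr, Computable₂ σ ∧ ∀ m, G m = ⋃ i, cyl (σ m i)) ∧
  ∀ m, ρ (G m) ≤ (2 : ENNReal)⁻¹ ^ m

/-- `μ` is Martin-Löf absolutely continuous in `ρ`: `inf_m μ(G_m) = 0`
for every `ρ`-Martin-Löf test `(G_m)`. -/
def MLAC (μ ρ : Measure Cantor) : Prop :=
  ∀ G : ℕ → Set Cantor, IsMLTest ρ G → ⨅ m, μ (G m) = 0

/-- `Z` is Martin-Löf random with respect to `lam`. -/
def MLRandom (lam : Measure Cantor) (Z : Cantor) : Prop :=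
  ∀ G : ℕ → Set Cantor, IsMLTest lam G → Z ∉ ⋂ m, G m

/-- `ρ` is a computable measure: `ρ [x]` is a computable real, uniformly in `x`. -/
def ComputableMeasure (ρ : Measure Cantor) : Prop :=
  ∃ q : BStr → ℕ → ℚ, Computable₂ q ∧
    ∀ x k, |(q x k : ℝ) - (ρ (cyl x)).toReal| ≤ (2 : ℝ)⁻¹ ^ k

/-- `U` is a universal plain machine. -/
def UniversalPlain (U : BStr →. BStr) : Prop :=
  Partrec U ∧ ∀ M : BStr →. BStr, Partrec M →
    ∃ c : ℕ, ∀ p x, x ∈ M p → ∃ q : BStr, q.length ≤ p.length + c ∧ x ∈ U q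

/-- The domain of `M` is an antichain under the prefix relation. -/
def PrefixFreeDom (M : BStr →. BStr) : Prop :=
  ∀ p q : BStr, (M p).Dom → (M q).Dom → p <+: q → p = q

/-- `U` is a universal prefix-free machine. -/
def UniversalPrefixFree (U : BStr →. BStr) : Prop :=
  Partrec U ∧ PrefixFreeDom U ∧
  ∀ M : BStr →. BStr, Partrec M → PrefixFreeDom M →
    ∃ c : ℕ, ∀ p x, x ∈ M p → ∃ q : BStr, q.length ≤ p.length + c ∧ x ∈ U q

/-- Kolmogorov complexity of the string `x` with respect to the machine `U`:
the minimal length of a `U`-description of `x`. -/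
noncomputable def cpx (U : BStr →. BStr) (x : BStr) : ℕ :=
  sInf {n | ∃ q : BStr, q.length = n ∧ x ∈ U q}

/-- A natural number `n` identified with the string `0^n`. -/
def numStr (n : ℕ) : BStr := List.replicate n false

/-- Complexity of the natural number `n` (i.e., of the string `0^n`). -/
noncomputable def cpxN (U : BStr →. BStr) (n : ℕ) : ℕ := cpx U (numStr n)

/-- The `μ`-average complexity of the strings of length `n`:
`Σ_{|x|=n} cpx(x) · μ[x]`. -/
noncomputable def avgCpx (U : BStr →. BStr) (μ : Measure Cantor) (n : ℕ) : ℝ :=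
  ∑ v : Fin n → Bool, (cpx U (List.ofFn v) : ℝ) * (μ (cyl (List.ofFn v))).toReal

/-- A measure `μ` is trivial for the complexity given by the machine `U`
(e.g. K-trivial when `U` is the universal prefix-free machine, C-trivial
when `U` is the universal plain machine). -/
def MeasTrivial (U : BStr →. BStr) (μ : Measure Cantor) : Prop :=
  ∃ c : ℝ, ∀ n : ℕ, avgCpx U μ n ≤ (cpxN U n : ℝ) + c

/-- A universal plain machine with an auxiliary (conditioning) input;
natural-number conditions are identified with unary strings and pairs
are encoded by the computable pairing `Nat.pair`. -/
def UniversalPlainCond (U : BStr → ℕ →. BStr) : Prop :=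
  Partrec₂ U ∧ ∀ M : BStr → ℕ →. BStr, Partrec₂ M →
    ∃ c : ℕ, ∀ p y x, x ∈ M p y → ∃ q : BStr, q.length ≤ p.length + c ∧ x ∈ U q y

/-- For every condition `y`, the domain of `M (·) y` is an antichain under
the prefix relation. -/
def PrefixFreeDomCond (M : BStr → ℕ →. BStr) : Prop :=
  ∀ (y : ℕ) (p q : BStr), (M p y).Dom → (M q y).Dom → p <+: q → p = q

/-- A universal prefix-free machine with an auxiliary (conditioning) input. -/
def UniversalPrefixFreeCond (U : BStr → ℕ →. BStr) : Prop :=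
  Partrec₂ U ∧ PrefixFreeDomCond U ∧
  ∀ M : BStr → ℕ →. BStr, Partrec₂ M → PrefixFreeDomCond M →
    ∃ c : ℕ, ∀ p y x, x ∈ M p y → ∃ q : BStr, q.length ≤ p.length + c ∧ x ∈ U q y

/-- Conditional Kolmogorov complexity of `x` given `y`, with respect to the
machine `U` with auxiliary input. -/
noncomputable def cpxCond (U : BStr → ℕ →. BStr) (x : BStr) (y : ℕ) : ℕ :=
  sInf {n | ∃ q : BStr, q.length = n ∧ x ∈ U q y}

namespace CK

open Encodable Denumerable

section tools

variable {α β γ δ : Type} [Primcodable α] [Primcodable β] [Primcodable γ] [Primcodable δ]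

/-- Stage functions for partial computable functions. -/
theorem exists_stage {F : α →. β} (hF : Partrec F) :
    ∃ H : α → ℕ → Option β, Computable₂ H ∧ ∀ a b, b ∈ F a ↔ ∃ s, H a s = some b := by
  obtain ⟨c, hc⟩ := Nat.Partrec.Code.exists_code.1 hF
  refine ⟨fun a s => (Nat.Partrec.Code.evaln s c (encode a)).bind decode, ?_, ?_⟩
  · refine Computable.option_bind ?_ (Computable.decode.comp Computable.snd)
    exact Nat.Partrec.Code.primrec_evaln.to_comp.comp
      ((Computable.snd.pair (Computable.const c)).pair (Computable.encode.comp Computable.fst))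
  · intro a b
    have h1 : b ∈ F a ↔ encode b ∈ c.eval (encode a) := by
      rw [hc]; simp
    rw [h1, Nat.Partrec.Code.evaln_complete]
    constructor
    · rintro ⟨k, hk⟩
      refine ⟨k, ?_⟩
      rw [Option.mem_def] at hk
      simp [hk]
    · rintro ⟨k, hk⟩
      refine ⟨k, ?_⟩
      obtain ⟨m, hm, hb⟩ := Option.bind_eq_some_iff.1 hk
      have := Nat.Partrec.Code.evaln_sound hm
      rw [hc] at this
      simp only [encodek, Part.coe_some, Part.bind_some, Part.mem_map_iff] at this
      obtain ⟨b', _, rfl⟩ := this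
      simp only [encodek, Option.some.injEq] at hb
      subst hb
      exact hm

theorem comp_mem [DecidableEq β] : Computable₂ fun (b : β) (L : List β) => decide (b ∈ L) := by
  have h : PrimrecRel fun (L : List β) (b : β) => ∃ a ∈ L, a = b :=
    PrimrecRel.exists_mem_list Primrec.eq
  have h2 : PrimrecPred fun x : β × List β => ∃ a ∈ x.2, a = x.1 :=
    h.comp Primrec.snd Primrec.fst
  have h3 : PrimrecPred fun x : β × List β => x.1 ∈ x.2 := h2.of_eq (by simp)
  exact h3.decide.to_comp

/-- Distinct values enumerated by `f` before stage `s`. -/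
def acc [DecidableEq β] (f : ℕ → Option β) : ℕ → List β
  | 0 => []
  | s + 1 => (f s).elim (acc f s) fun b => bif decide (b ∈ acc f s) then acc f s else acc f s ++ [b]

/-- The value that is new at stage `s`. -/
def newAt [DecidableEq β] (f : ℕ → Option β) (s : ℕ) : Option β :=
  (f s).bind fun b => bif decide (b ∈ acc f s) then none else some b

theorem comp_acc [DecidableEq β] {f : α → ℕ → Option β} (hf : Computable₂ f) :
    Computable₂ fun a s => acc (f a) s := by
  have : Computable fun x : α × ℕ => (Nat.rec ([] : List β) (fun s L => (f x.1 s).elim L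
      fun b => bif decide (b ∈ L) then L else L ++ [b]) x.2 : List β) := by
    refine Computable.nat_rec (f := fun x : α × ℕ => x.2) (g := fun _ => ([] : List β))
      (h := fun (x : α × ℕ) (y : ℕ × List β) => (f x.1 y.1).elim y.2
      fun b => bif decide (b ∈ y.2) then y.2 else y.2 ++ [b]) Computable.snd (Computable.const _) ?_
    refine Computable₂.mk ?_
    refine (Computable.option_casesOn (o := fun x : (α × ℕ) × (ℕ × List β) => f x.1.1 x.2.1)
      (f := fun x => x.2.2)
      (g := fun x b => bif decide (b ∈ x.2.2) then x.2.2 else x.2.2 ++ [b]) ?_ ?_ ?_).of_eq ?_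
    · exact hf.comp (Computable.fst.comp Computable.fst) (Computable.fst.comp Computable.snd)
    · exact Computable.snd.comp Computable.snd
    · refine Computable₂.mk (Computable.cond ?_ ?_ ?_)
      · exact comp_mem.comp Computable.snd (Computable.snd.comp (Computable.snd.comp Computable.fst))
      · exact Computable.snd.comp (Computable.snd.comp Computable.fst)
      · exact Computable.list_concat.comp (Computable.snd.comp (Computable.snd.comp Computable.fst))
          Computable.snd
    · intro x; cases h : f x.1.1 x.2.1 <;> simp
  refine Computable.of_eq this ?_
  rintro ⟨a, s⟩
  induction s with
  | zero => rfl
  | succ s ih => simp only [acc] at ih ⊢; rw [← ih]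

theorem comp_newAt [DecidableEq β] {f : α → ℕ → Option β} (hf : Computable₂ f) :
    Computable₂ fun a s => newAt (f a) s := by
  refine Computable.option_bind hf ?_
  refine Computable₂.mk (Computable.cond ?_ ?_ ?_)
  · exact comp_mem.comp Computable.snd ((comp_acc hf).comp (Computable.fst.comp Computable.fst)
      (Computable.snd.comp Computable.fst))
  · exact Computable.const _
  · exact Computable.option_some.comp Computable.snd

theorem acc_succ [DecidableEq β] (f : ℕ → Option β) (s : ℕ) :
    acc f (s + 1) = acc f s ++ (newAt f s).toList := by
  cases h : f s with
  | none => simp [acc, newAt, h]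
  | some b => by_cases hb : b ∈ acc f s <;> simp [acc, newAt, h, hb]

theorem mem_acc [DecidableEq β] (f : ℕ → Option β) (s : ℕ) (b : β) :
    b ∈ acc f s ↔ ∃ u < s, f u = some b := by
  induction s with
  | zero => simp [acc]
  | succ s ih =>
    rw [acc_succ, List.mem_append, ih]
    constructor
    · rintro (⟨u, hu, h⟩ | h)
      · exact ⟨u, by omega, h⟩
      · refine ⟨s, by omega, ?_⟩
        simp only [newAt, Option.mem_toList, Option.mem_def, Option.bind_eq_some_iff] at h
        obtain ⟨b', h1, h2⟩ := h
        by_cases hb : b' ∈ acc f s <;> simp_all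
    · rintro ⟨u, hu, h⟩
      by_cases hus : u < s
      · exact Or.inl ⟨u, hus, h⟩
      · obtain rfl : u = s := by omega
        by_cases hb : b ∈ acc f u
        · exact Or.inl (ih.1 hb)
        · right; simp [newAt, h, hb]

theorem nodup_acc [DecidableEq β] (f : ℕ → Option β) (s : ℕ) : (acc f s).Nodup := by
  induction s with
  | zero => simp [acc]
  | succ s ih =>
    simp only [acc]
    cases h : f s with
    | none => simpa
    | some b =>
      by_cases hb : b ∈ acc f s
      · simpa [hb]
      · simp only [Option.elim, hb, decide_false, cond_false]
        exact List.Nodup.append ih (by simp) (by simpa using hb)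

theorem acc_prefix [DecidableEq β] (f : ℕ → Option β) {s t : ℕ} (h : s ≤ t) :
    acc f s <+: acc f t := by
  induction t, h using Nat.le_induction with
  | base => exact List.prefix_rfl
  | succ t _ ih => rw [acc_succ]; exact ih.trans (List.prefix_append _ _)

/-- Uniformly enumerable families. -/
def EnumFam (S : α → Set β) : Prop :=
  ∃ f : α → ℕ → Option β, Computable₂ f ∧ ∀ a b, b ∈ S a ↔ ∃ s, f a s = some b

/-- All duplicate-free lists inside `A` have length at most `B`. -/
def Small (A : Set β) (B : ℕ) : Prop := ∀ l : List β, l.Nodup → (∀ b ∈ l, b ∈ A) → l.length ≤ B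

/-- Some duplicate-free list inside `A` has length at least `B`. -/
def Big (A : Set β) (B : ℕ) : Prop := ∃ l : List β, l.Nodup ∧ (∀ b ∈ l, b ∈ A) ∧ B ≤ l.length

theorem exists_idx [DecidableEq β] {S : α → Set β} (hS : EnumFam S) :
    ∃ I : α → ℕ →. β, Partrec₂ I ∧ ∀ a B b, Small (S a) B → b ∈ S a → ∃ i < B, b ∈ I a i := by
  obtain ⟨f, hf, hfS⟩ := hS
  refine ⟨fun a i => Nat.rfindOpt fun s => (acc (f a) s)[i]?, ?_, ?_⟩
  · refine Partrec.rfindOpt (α := α × ℕ) (f := fun x s => (acc (f x.1) s)[x.2]?) ?_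
    exact Computable.list_getElem?.comp ((comp_acc hf).comp (Computable.fst.comp Computable.fst)
      Computable.snd) (Computable.snd.comp Computable.fst)
  · intro a B b hB hb
    obtain ⟨s, hs⟩ := (hfS a b).1 hb
    have hm : b ∈ acc (f a) (s + 1) := (mem_acc _ _ _).2 ⟨s, by omega, hs⟩
    obtain ⟨i, hi, hib⟩ := List.getElem_of_mem hm
    have hlen : (acc (f a) (s + 1)).length ≤ B := by
      refine hB _ (nodup_acc _ _) fun c hc => ?_
      obtain ⟨u, _, hu⟩ := (mem_acc _ _ _).1 hc
      exact (hfS a c).2 ⟨u, hu⟩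
    refine ⟨i, by omega, ?_⟩
    refine (Nat.rfindOpt_mono ?_).2 ⟨s + 1, ?_⟩
    · intro c m n hmn hc
      obtain ⟨r, hr⟩ := acc_prefix (f a) hmn
      rw [← hr]
      rw [Option.mem_def] at hc ⊢
      rw [List.getElem?_append_left (List.getElem?_eq_some_iff.1 hc).1, hc]
    · simp [hi, hib]

end tools
end CK

namespace CK

open Encodable Denumerable

section tools2

variable {α β γ δ : Type} [Primcodable α] [Primcodable β] [Primcodable γ] [Primcodable δ]

theorem comp_pow : Computable₂ fun a b : ℕ => a ^ b :=
  (Primrec₂.unpaired'.1 Nat.Primrec.pow).to_comp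

theorem comp_le : Computable₂ fun a b : ℕ => decide (a ≤ b) := Primrec.nat_le.decide.to_comp

theorem comp_eq : Computable₂ fun a b : ℕ => decide (a = b) :=
  (PrimrecRel.decide (Primrec.eq (α := ℕ))).to_comp

theorem comp_add : Computable₂ fun a b : ℕ => a + b := Primrec.nat_add.to_comp
theorem comp_mul : Computable₂ fun a b : ℕ => a * b := Primrec.nat_mul.to_comp
theorem comp_sub : Computable₂ fun a b : ℕ => a - b := Primrec.nat_sub.to_comp

theorem comp_numStr : Computable numStr := by
  have : Primrec fun n : ℕ => (Nat.rec ([] : BStr) (fun _ L => false :: L) n : BStr) :=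
    Primrec.nat_rec₁ _ ((Primrec.list_cons.comp (Primrec.const false) Primrec.snd).to₂)
  refine Computable.of_eq this.to_comp fun n => ?_
  induction n with
  | zero => rfl
  | succ n ih => simp only [ih]; rfl

theorem exists_acc_of_list [DecidableEq β] {f : ℕ → Option β} (l : List β)
    (h : ∀ b ∈ l, ∃ s, f s = some b) : ∃ s, ∀ b ∈ l, b ∈ acc f s := by
  induction l with
  | nil => exact ⟨0, by simp⟩
  | cons c l ih =>
    obtain ⟨s, hs⟩ := ih fun b hb => h b (List.mem_cons_of_mem _ hb)
    obtain ⟨u, hu⟩ := h c List.mem_cons_self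
    refine ⟨s + u + 1, fun b hb => ?_⟩
    rcases List.mem_cons.1 hb with rfl | hb
    · exact (mem_acc _ _ _).2 ⟨u, by omega, hu⟩
    · exact (acc_prefix f (by omega)).subset (hs b hb)

theorem enum_big [DecidableEq β] {S : γ × α → Set β} (hS : EnumFam S) :
    EnumFam fun x : ℕ × γ => {a : α | Big (S (x.2, a)) x.1} := by
  obtain ⟨f, hf, hfS⟩ := hS
  refine ⟨fun x s => (decode (α := α) s.unpair.1).bind fun a =>
    bif decide (x.1 ≤ (acc (f (x.2, a)) s.unpair.2).length) then some a else none, ?_, ?_⟩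
  · refine Computable.option_bind ?_ ?_
    · exact Computable.decode.comp (Computable.fst.comp (Computable.unpair.comp Computable.snd))
    · refine Computable₂.mk (Computable.cond ?_ (Computable.option_some.comp Computable.snd)
        (Computable.const _))
      refine comp_le.comp (Computable.fst.comp (Computable.fst.comp Computable.fst))
        (Computable.list_length.comp ((comp_acc hf).comp ?_ ?_))
      · exact ((Computable.snd.comp (Computable.fst.comp Computable.fst)).pair Computable.snd)
      · exact Computable.snd.comp (Computable.unpair.comp (Computable.snd.comp Computable.fst))
  · rintro ⟨N, g⟩ a
    constructor
    · rintro ⟨l, hl, hlS, hN⟩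
      obtain ⟨s, hs⟩ := exists_acc_of_list (f := f (g, a)) l fun b hb => (hfS _ b).1 (hlS b hb)
      refine ⟨Nat.pair (encode a) s, ?_⟩
      have : l.length ≤ (acc (f (g, a)) s).length := (hl.subperm hs).length_le
      have h2 : N ≤ (acc (f (g, a)) s).length := by simp only at hN; omega
      simp [h2]
    · rintro ⟨s, hs⟩
      obtain ⟨a', _, h2⟩ := Option.bind_eq_some_iff.1 hs
      by_cases h3 : N ≤ (acc (f (g, a')) s.unpair.2).length
      · simp only [h3, decide_true, cond_true, Option.some.injEq] at h2
        subst h2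
        refine ⟨_, nodup_acc _ _, fun b hb => ?_, h3⟩
        obtain ⟨u, _, hu⟩ := (mem_acc _ _ _).1 hb
        exact (hfS _ b).2 ⟨u, hu⟩
      · simp [h3] at h2

/-- Binary value of a string. -/
def val (w : BStr) : ℕ := w.foldl (fun a b => 2 * a + b.toNat) 0

theorem comp_val : Computable val := by
  have : Primrec fun w : BStr => w.foldl (fun a b => 2 * a + b.toNat) 0 := by
    refine Primrec.list_foldl (h := fun _ (x : ℕ × Bool) => 2 * x.1 + x.2.toNat) Primrec.id
      (Primrec.const 0) ?_
    refine Primrec₂.mk ?_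
    refine Primrec.nat_add.comp (Primrec.nat_double.comp (Primrec.fst.comp Primrec.snd)) ?_
    exact (Primrec.dom_finite Bool.toNat).comp (Primrec.snd.comp Primrec.snd)
  exact this.to_comp

theorem val_append (w v : BStr) : val (w ++ v) = val w * 2 ^ v.length + val v := by
  have key : ∀ (v : BStr) (a : ℕ), v.foldl (fun a b => 2 * a + b.toNat) a
      = a * 2 ^ v.length + v.foldl (fun a b => 2 * a + b.toNat) 0 := by
    intro v
    induction v with
    | nil => simp
    | cons b v ih =>
      intro a
      simp only [List.foldl_cons, List.length_cons]
      rw [ih, ih (2 * 0 + b.toNat)]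
      ring
  unfold val
  rw [List.foldl_append, key]

theorem val_lt (w : BStr) : val w < 2 ^ w.length := by
  induction w using List.reverseRecOn with
  | nil => simp [val]
  | append_singleton w b ih =>
    rw [val_append]
    have : val [b] < 2 := by cases b <;> simp [val]
    simp only [List.length_append, List.length_singleton, pow_succ]
    omega

theorem exists_val (l : ℕ) : ∀ i < 2 ^ l, ∃ w : BStr, w.length = l ∧ val w = i := by
  induction l with
  | zero => intro i hi; exact ⟨[], rfl, by simp at hi; simp [val, hi]⟩
  | succ l ih =>
    intro i hi
    obtain ⟨w, hw, hv⟩ := ih (i / 2) (by rw [pow_succ] at hi; omega)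
    refine ⟨w ++ [decide (i % 2 = 1)], by simp [hw], ?_⟩
    rw [val_append, hv]
    rcases Nat.mod_two_eq_zero_or_one i with h | h <;> simp [h, val] <;> omega

/-- Prefix-free domain. -/
def PF (M : BStr →. γ) : Prop := ∀ p q : BStr, (M p).Dom → (M q).Dom → p <+: q → p = q

theorem exists_comp (A : δ → BStr →. α) (B : δ → α → BStr →. γ)
    (hA : Partrec fun z : δ × BStr => A z.1 z.2)
    (hB : Partrec fun z : (δ × α) × BStr => B z.1.1 z.1.2 z.2)
    (hpf : ∀ d, PF (A d)) :
    ∃ D : δ → BStr →. γ, Partrec₂ D ∧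
      (∀ d p r a g, a ∈ A d p → g ∈ B d a r → g ∈ D d (p ++ r)) ∧
      ((∀ d a, PF (B d a)) → ∀ d, PF (D d)) := by
  obtain ⟨HA, hHA, hAs⟩ := exists_stage hA
  obtain ⟨HB, hHB, hBs⟩ := exists_stage hB
  let F : δ × BStr → ℕ → Option γ := fun x s =>
    (HA (x.1, x.2.take s.unpair.1) s.unpair.2.unpair.1).bind fun a =>
      HB ((x.1, a), x.2.drop s.unpair.1) s.unpair.2.unpair.2
  have hF : Computable₂ F := by
    have u1 : Computable fun y : (δ × BStr) × ℕ => y.2.unpair.1 :=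
      Computable.fst.comp (Computable.unpair.comp Computable.snd)
    have u2 : Computable fun y : (δ × BStr) × ℕ => y.2.unpair.2.unpair.1 :=
      Computable.fst.comp (Computable.unpair.comp (Computable.snd.comp
        (Computable.unpair.comp Computable.snd)))
    have u3 : Computable fun y : (δ × BStr) × ℕ => y.2.unpair.2.unpair.2 :=
      Computable.snd.comp (Computable.unpair.comp (Computable.snd.comp
        (Computable.unpair.comp Computable.snd)))
    have d1 : Computable fun y : (δ × BStr) × ℕ => y.1.1 := Computable.fst.comp Computable.fst
    have z1 : Computable fun y : (δ × BStr) × ℕ => y.1.2 := Computable.snd.comp Computable.fst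
    refine Computable.option_bind ?_ ?_
    · exact hHA.comp (d1.pair (Primrec.list_take.to_comp.comp u1 z1)) u2
    · refine Computable₂.mk (hHB.comp (((d1.comp Computable.fst).pair Computable.snd).pair
        (Primrec.list_drop.to_comp.comp (u1.comp Computable.fst) (z1.comp Computable.fst)))
        (u3.comp Computable.fst))
  have hspec : ∀ d z g, g ∈ Nat.rfindOpt (F (d, z)) →
      ∃ p r a, z = p ++ r ∧ a ∈ A d p ∧ g ∈ B d a r := by
    intro d z g hg
    obtain ⟨s, hs⟩ := Nat.rfindOpt_spec hg
    obtain ⟨a, h1, h2⟩ := Option.bind_eq_some_iff.1 hs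
    exact ⟨z.take s.unpair.1, z.drop s.unpair.1, a, (List.take_append_drop _ _).symm,
      (hAs (d, _) a).2 ⟨_, h1⟩, (hBs ((d, a), _) g).2 ⟨_, h2⟩⟩
  have huniq : ∀ d p r p' r', (A d p).Dom → (A d p').Dom → p ++ r <+: p' ++ r' →
      p = p' ∧ r <+: r' := by
    intro d p r p' r' h h' he
    have h1 : p <+: p' ++ r' := (List.prefix_append p r).trans he
    have h2 : p' <+: p' ++ r' := List.prefix_append _ _
    have : p = p' := by
      rcases List.prefix_or_prefix_of_prefix h1 h2 with h3 | h3
      · exact hpf d _ _ h h' h3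
      · exact (hpf d _ _ h' h h3).symm
    subst this
    exact ⟨rfl, (List.prefix_append_right_inj _).1 he⟩
  refine ⟨fun d z => Nat.rfindOpt (F (d, z)), Partrec.rfindOpt hF, ?_, ?_⟩
  · intro d p r a g ha hg
    obtain ⟨s, hs⟩ := (hAs (d, p) a).1 ha
    obtain ⟨u, hu⟩ := (hBs ((d, a), r) g).1 hg
    have hdom : (Nat.rfindOpt (F (d, p ++ r))).Dom := by
      refine Nat.rfindOpt_dom.2 ⟨Nat.pair p.length (Nat.pair s u), g, ?_⟩
      simp [F, hs, hu]
    obtain ⟨p', r', a', he, ha', hg'⟩ := hspec d _ _ (Part.get_mem hdom)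
    obtain ⟨rfl, hr⟩ := huniq d p r p' r' (Part.dom_iff_mem.2 ⟨_, ha⟩) (Part.dom_iff_mem.2 ⟨_, ha'⟩)
      (he ▸ List.prefix_rfl)
    obtain rfl := List.append_cancel_left he
    obtain rfl := Part.mem_unique ha ha'
    have := Part.mem_unique hg hg'
    rw [this]
    exact Part.get_mem hdom
  · intro hBpf d z z' hz hz' hzz
    obtain ⟨p, r, a, rfl, ha, hg⟩ := hspec d _ _ (Part.get_mem hz)
    obtain ⟨p', r', a', rfl, ha', hg'⟩ := hspec d _ _ (Part.get_mem hz')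
    obtain ⟨rfl, hr⟩ := huniq d p r p' r' (Part.dom_iff_mem.2 ⟨_, ha⟩) (Part.dom_iff_mem.2 ⟨_, ha'⟩)
      hzz
    obtain rfl := Part.mem_unique ha ha'
    rw [hBpf d a r r' (Part.dom_iff_mem.2 ⟨_, hg⟩) (Part.dom_iff_mem.2 ⟨_, hg'⟩) hr]

/-- The unary code of `f`. -/
def ucode (f : ℕ) : BStr := List.replicate f true ++ [false]

theorem length_ucode (f : ℕ) : (ucode f).length = f + 1 := by simp [ucode]

theorem exists_unary : ∃ A : BStr →. ℕ, Partrec A ∧ PF A ∧ ∀ f, f ∈ A (ucode f) := by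
  have hr : Computable fun n : ℕ => ucode n := by
    have h1 : Primrec fun n : ℕ => (Nat.rec ([false] : BStr) (fun _ L => true :: L) n : BStr) :=
      Primrec.nat_rec₁ _ ((Primrec.list_cons.comp (Primrec.const true) Primrec.snd).to₂)
    refine Computable.of_eq h1.to_comp fun n => ?_
    induction n with
    | zero => rfl
    | succ n ih => simp only [ih]; rfl
  have heq : Computable₂ fun x y : BStr => decide (x = y) :=
    (PrimrecRel.decide (Primrec.eq (α := BStr))).to_comp
  let g : BStr → Option ℕ := fun z => bif decide (z = ucode (z.length - 1)) then
    some (z.length - 1) else none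
  have hl : Computable fun z : BStr => z.length - 1 :=
    comp_sub.comp Computable.list_length (Computable.const 1)
  have hg : Computable g := Computable.cond (heq.comp Computable.id (hr.comp hl))
    (Computable.option_some.comp hl) (Computable.const _)
  have hdom : ∀ z, (g z : Part ℕ).Dom → ∃ f, z = ucode f := by
    intro z hz
    by_cases h : z = ucode (z.length - 1)
    · exact ⟨_, h⟩
    · simp [g, h] at hz
  refine ⟨fun z => (g z : Part ℕ), Computable.ofOption hg, ?_, ?_⟩
  · intro p q hp hq hpq
    obtain ⟨f, rfl⟩ := hdom p hp
    obtain ⟨f', rfl⟩ := hdom q hq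
    have hle := hpq.length_le
    simp only [length_ucode] at hle
    by_cases h : f = f'
    · rw [h]
    · exfalso
      have h1 : (ucode f)[f]'(by simp [length_ucode]) = (ucode f')[f]'(by simp [length_ucode]; omega) :=
        hpq.getElem _
      have : f < f' := by omega
      simp [ucode, List.getElem_append, this] at h1
  · intro f
    simp [g, length_ucode]

end tools2
end CK

namespace CK

open Encodable Denumerable

section kc

variable {α β : Type} [Primcodable α] [Primcodable β]

/-- Cumulative weight of the requests before stage `s`, as a dyadic fraction. -/
def cum [DecidableEq β] (f : ℕ → Option β) (len : β → ℕ) : ℕ → ℕ × ℕ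
  | 0 => (0, 0)
  | s + 1 => (newAt f s).elim (cum f len s) fun b =>
      ((cum f len s).1 * 2 ^ len b + 2 ^ (cum f len s).2, (cum f len s).2 + len b)

theorem comp_cum [DecidableEq β] {f : α → ℕ → Option β} (hf : Computable₂ f) {len : α → β → ℕ}
    (hlen : Computable₂ len) : Computable₂ fun a s => cum (f a) (len a) s := by
  have : Computable fun x : α × ℕ => (Nat.rec ((0, 0) : ℕ × ℕ) (fun s c => (newAt (f x.1) s).elim c
      fun b => (c.1 * 2 ^ len x.1 b + 2 ^ c.2, c.2 + len x.1 b)) x.2 : ℕ × ℕ) := by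
    refine Computable.nat_rec (f := fun x : α × ℕ => x.2) (g := fun _ => ((0, 0) : ℕ × ℕ))
      (h := fun (x : α × ℕ) (y : ℕ × (ℕ × ℕ)) => (newAt (f x.1) y.1).elim y.2
      fun b => (y.2.1 * 2 ^ len x.1 b + 2 ^ y.2.2, y.2.2 + len x.1 b))
      Computable.snd (Computable.const _) ?_
    refine Computable₂.mk ?_
    refine (Computable.option_casesOn
      (o := fun x : (α × ℕ) × (ℕ × (ℕ × ℕ)) => newAt (f x.1.1) x.2.1)
      (f := fun x => x.2.2)
      (g := fun x b => (x.2.2.1 * 2 ^ len x.1.1 b + 2 ^ x.2.2.2, x.2.2.2 + len x.1.1 b))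
      ?_ ?_ ?_).of_eq ?_
    · exact (comp_newAt hf).comp (Computable.fst.comp Computable.fst)
        (Computable.fst.comp Computable.snd)
    · exact Computable.snd.comp Computable.snd
    · have hl : Computable fun y : ((α × ℕ) × (ℕ × (ℕ × ℕ))) × β => len y.1.1.1 y.2 :=
        hlen.comp (Computable.fst.comp (Computable.fst.comp Computable.fst)) Computable.snd
      have h1 : Computable fun y : ((α × ℕ) × (ℕ × (ℕ × ℕ))) × β => y.1.2.2.1 :=
        Computable.fst.comp (Computable.snd.comp (Computable.snd.comp Computable.fst))
      have h2 : Computable fun y : ((α × ℕ) × (ℕ × (ℕ × ℕ))) × β => y.1.2.2.2 :=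
        Computable.snd.comp (Computable.snd.comp (Computable.snd.comp Computable.fst))
      have two : Computable fun _ : ((α × ℕ) × (ℕ × (ℕ × ℕ))) × β => 2 := Computable.const 2
      exact Computable₂.mk ((comp_add.comp (comp_mul.comp h1 (comp_pow.comp two hl))
        (comp_pow.comp two h2)).pair (comp_add.comp h2 hl))
    · intro x; cases h : newAt (f x.1.1) x.2.1 <;> simp
  refine Computable.of_eq this ?_
  rintro ⟨a, s⟩
  induction s with
  | zero => rfl
  | succ s ih => simp only [cum] at ih ⊢; rw [← ih]

/-- Real value of the cumulative weight. -/
noncomputable def cumR [DecidableEq β] (f : ℕ → Option β) (len : β → ℕ) (s : ℕ) : ℝ :=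
  (cum f len s).1 / 2 ^ (cum f len s).2

theorem cumR_succ [DecidableEq β] (f : ℕ → Option β) (len : β → ℕ) (s : ℕ) :
    cumR f len (s + 1) = cumR f len s + (newAt f s).elim 0 fun b => (1 / 2 : ℝ) ^ len b := by
  cases h : newAt f s with
  | none => simp [cumR, cum, h]
  | some b =>
    simp only [cumR, cum, h, Option.elim]
    push_cast
    rw [pow_add]
    rw [one_div, inv_pow]
    field_simp

theorem cumR_mono [DecidableEq β] (f : ℕ → Option β) (len : β → ℕ) : Monotone (cumR f len) := by
  refine monotone_nat_of_le_succ fun s => ?_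
  rw [cumR_succ]
  cases newAt f s <;> simp

theorem cumR_eq [DecidableEq β] (f : ℕ → Option β) (len : β → ℕ) (s : ℕ) :
    cumR f len s = ((acc f s).map fun b => (1 / 2 : ℝ) ^ len b).sum := by
  induction s with
  | zero => simp [cumR, cum, acc]
  | succ s ih =>
    rw [cumR_succ, acc_succ, ih]
    cases newAt f s <;> simp

/-- Acceptance test of the Kraft-Chaitin machine. -/
def okc (c c' : ℕ × ℕ) (l : ℕ) (p : BStr) : Bool :=
  decide (l + 1 = p.length) && (decide (c.1 * 2 ^ p.length ≤ val p * 2 ^ c.2) &&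
    decide ((val p + 1) * 2 ^ c'.2 ≤ c'.1 * 2 ^ p.length))

theorem okc_iff (c c' : ℕ × ℕ) (l : ℕ) (p : BStr) : okc c c' l p = true ↔
    l + 1 = p.length ∧ (c.1 / 2 ^ c.2 : ℝ) ≤ val p / 2 ^ p.length ∧
      ((val p + 1) / 2 ^ p.length : ℝ) ≤ c'.1 / 2 ^ c'.2 := by
  rw [div_le_div_iff₀ (by positivity) (by positivity), div_le_div_iff₀ (by positivity) (by positivity)]
  simp only [okc, Bool.and_eq_true, decide_eq_true_eq]
  norm_cast

theorem comp_okc : Computable fun x : ((ℕ × ℕ) × (ℕ × ℕ)) × (ℕ × BStr) =>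
    okc x.1.1 x.1.2 x.2.1 x.2.2 := by
  let T := ((ℕ × ℕ) × (ℕ × ℕ)) × (ℕ × BStr)
  have a1 : Computable fun x : T => x.1.1.1 :=
    Computable.fst.comp (Computable.fst.comp Computable.fst)
  have a2 : Computable fun x : T => x.1.1.2 :=
    Computable.snd.comp (Computable.fst.comp Computable.fst)
  have b1 : Computable fun x : T => x.1.2.1 :=
    Computable.fst.comp (Computable.snd.comp Computable.fst)
  have b2 : Computable fun x : T => x.1.2.2 :=
    Computable.snd.comp (Computable.snd.comp Computable.fst)
  have l : Computable fun x : T => x.2.1 := Computable.fst.comp Computable.snd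
  have p : Computable fun x : T => x.2.2 := Computable.snd.comp Computable.snd
  have pl : Computable fun x : T => x.2.2.length := Computable.list_length.comp p
  have pv : Computable fun x : T => val x.2.2 := comp_val.comp p
  have two : Computable fun _ : T => 2 := Computable.const 2
  have and_c : Computable₂ Bool.and := Primrec.and.to_comp
  exact and_c.comp (comp_eq.comp (Computable.succ.comp l) pl) (and_c.comp
    (comp_le.comp (comp_mul.comp a1 (comp_pow.comp two pl)) (comp_mul.comp pv (comp_pow.comp two a2)))
    (comp_le.comp (comp_mul.comp (Computable.succ.comp pv) (comp_pow.comp two b2))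
      (comp_mul.comp b1 (comp_pow.comp two pl))))

theorem comp_okc_of {σ : Type} [Primcodable σ] {c c' : σ → ℕ × ℕ} {l : σ → ℕ} {p : σ → BStr}
    (hc : Computable c) (hc' : Computable c') (hl : Computable l) (hp : Computable p) :
    Computable fun x => okc (c x) (c' x) (l x) (p x) :=
  Computable.comp comp_okc ((hc.pair hc').pair (hl.pair hp))

theorem okc_unique [DecidableEq β] (f : ℕ → Option β) (len : β → ℕ) {s s' l l' : ℕ} {p p' : BStr}
    (h : okc (cum f len s) (cum f len (s + 1)) l p = true)
    (h' : okc (cum f len s') (cum f len (s' + 1)) l' p' = true) (hp : p <+: p') : s = s' := by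
  obtain ⟨_, h1, h2⟩ := (okc_iff _ _ _ _).1 h
  obtain ⟨_, h1', h2'⟩ := (okc_iff _ _ _ _).1 h'
  change cumR f len s ≤ _ at h1
  change cumR f len s' ≤ _ at h1'
  change _ ≤ cumR f len (s + 1) at h2
  change _ ≤ cumR f len (s' + 1) at h2'
  obtain ⟨r, rfl⟩ := hp
  have hv := val_append p r
  have hr := val_lt r
  have e1 : (val p : ℝ) / 2 ^ p.length ≤ val (p ++ r) / 2 ^ (p ++ r).length := by
    rw [div_le_div_iff₀ (by positivity) (by positivity), hv, List.length_append, pow_add]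
    norm_cast
    nlinarith [Nat.zero_le (val r * 2 ^ p.length)]
  have e2 : ((val (p ++ r) : ℝ) + 1) / 2 ^ (p ++ r).length ≤ (val p + 1) / 2 ^ p.length := by
    rw [div_le_div_iff₀ (by positivity) (by positivity), hv, List.length_append, pow_add]
    norm_cast
    have : val p * 2 ^ r.length + val r + 1 ≤ (val p + 1) * 2 ^ r.length := by
      rw [add_mul, one_mul]; omega
    calc _ ≤ (val p + 1) * 2 ^ r.length * 2 ^ p.length := Nat.mul_le_mul_right _ this
      _ = _ := by ring
  have e3 : (val (p ++ r) : ℝ) / 2 ^ (p ++ r).length < (val (p ++ r) + 1) / 2 ^ (p ++ r).length := by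
    apply div_lt_div_of_pos_right _ (by positivity); linarith
  rcases lt_trichotomy s s' with hs | hs | hs
  · have := cumR_mono f len (show s + 1 ≤ s' from hs)
    linarith
  · exact hs
  · have := cumR_mono f len (show s' + 1 ≤ s from hs)
    linarith

/-- Kraft-Chaitin theorem (with loss of one bit), uniformly in a parameter. -/
theorem exists_kc [DecidableEq β] {S : α → Set β} (hS : EnumFam S) {len : α → β → ℕ}
    (hlen : Computable₂ len) :
    ∃ M : α → BStr →. β, Partrec₂ M ∧ (∀ a, PF (M a)) ∧
      ∀ a b, b ∈ S a →
        (∀ F : Finset β, (∀ c ∈ F, c ∈ S a) → ∑ c ∈ F, (1 / 2 : ℝ) ^ len a c ≤ 1) →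
        ∃ p, p.length = len a b + 1 ∧ b ∈ M a p := by
  obtain ⟨f, hf, hfS⟩ := hS
  let G : α × BStr → ℕ → Option β := fun x s => (newAt (f x.1) s).bind fun b =>
    bif okc (cum (f x.1) (len x.1) s) (cum (f x.1) (len x.1) (s + 1)) (len x.1 b) x.2
    then some b else none
  have hG : Computable₂ G := by
    refine Computable.option_bind ((comp_newAt hf).comp (Computable.fst.comp Computable.fst)
      Computable.snd) ?_
    refine Computable₂.mk (Computable.cond ?_ (Computable.option_some.comp Computable.snd)
      (Computable.const _))
    have a : Computable fun y : ((α × BStr) × ℕ) × β => y.1.1.1 :=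
      Computable.fst.comp (Computable.fst.comp Computable.fst)
    have p : Computable fun y : ((α × BStr) × ℕ) × β => y.1.1.2 :=
      Computable.snd.comp (Computable.fst.comp Computable.fst)
    have s : Computable fun y : ((α × BStr) × ℕ) × β => y.1.2 :=
      Computable.snd.comp Computable.fst
    have c1 : Computable fun y : ((α × BStr) × ℕ) × β => cum (f y.1.1.1) (len y.1.1.1) y.1.2 :=
      (comp_cum hf hlen).comp a s
    have c2 : Computable fun y : ((α × BStr) × ℕ) × β =>
        cum (f y.1.1.1) (len y.1.1.1) (y.1.2 + 1) :=
      (comp_cum hf hlen).comp a (Computable.succ.comp s)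
    have l : Computable fun y : ((α × BStr) × ℕ) × β => len y.1.1.1 y.2 :=
      hlen.comp a Computable.snd
    exact comp_okc_of c1 c2 l p
  have hspec : ∀ a p b s, b ∈ G (a, p) s → newAt (f a) s = some b ∧
      okc (cum (f a) (len a) s) (cum (f a) (len a) (s + 1)) (len a b) p = true := by
    intro a p b s h
    obtain ⟨b', h1, h2⟩ := Option.bind_eq_some_iff.1 h
    by_cases h3 : okc (cum (f a) (len a) s) (cum (f a) (len a) (s + 1)) (len a b') p = true
    · simp only [h3, cond_true, Option.some.injEq] at h2
      subst h2
      exact ⟨h1, h3⟩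
    · simp [h3] at h2
  refine ⟨fun a p => Nat.rfindOpt (G (a, p)), Partrec.rfindOpt hG, ?_, ?_⟩
  · intro a p q hp hq hpq
    obtain ⟨s, hs⟩ := Nat.rfindOpt_spec (Part.get_mem hp)
    obtain ⟨u, hu⟩ := Nat.rfindOpt_spec (Part.get_mem hq)
    obtain ⟨n1, o1⟩ := hspec _ _ _ _ hs
    obtain ⟨n2, o2⟩ := hspec _ _ _ _ hu
    obtain rfl := okc_unique _ _ o1 o2 hpq
    have hb := Option.some.inj (n1.symm.trans n2)
    have l1 := ((okc_iff _ _ _ _).1 o1).1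
    have l2 := ((okc_iff _ _ _ _).1 o2).1
    rw [hb] at l1
    exact hpq.eq_of_length (by omega)
  · intro a b hb hsum
    have hex : ∃ s, newAt (f a) s = some b := by
      obtain ⟨u, hu⟩ := (hfS a b).1 hb
      have hex : ∃ s, b ∈ acc (f a) s := ⟨u + 1, (mem_acc _ _ _).2 ⟨u, by omega, hu⟩⟩
      classical
      have h1 := Nat.find_spec hex
      have h2 := fun {m} => Nat.find_min hex (m := m)
      generalize Nat.find hex = k at h1 h2
      cases k with
      | zero => simp [acc] at h1
      | succ k =>
        refine ⟨k, ?_⟩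
        rw [acc_succ, List.mem_append] at h1
        rcases h1 with h1 | h1
        · exact absurd h1 (h2 (by omega))
        · simpa using h1
    obtain ⟨s, hs⟩ := hex
    have hq : cumR (f a) (len a) (s + 1) = cumR (f a) (len a) s + (1 / 2 : ℝ) ^ len a b := by
      rw [cumR_succ, hs]; rfl
    have hq1 : cumR (f a) (len a) (s + 1) ≤ 1 := by
      rw [cumR_eq, ← List.sum_toFinset _ (nodup_acc _ _)]
      refine hsum _ fun c hc => ?_
      obtain ⟨u, _, hu⟩ := (mem_acc _ _ _).1 (List.mem_toFinset.1 hc)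
      exact (hfS a c).2 ⟨u, hu⟩
    have hq0 : 0 ≤ cumR (f a) (len a) s := by unfold cumR; positivity
    set q := cumR (f a) (len a) s with hqdef
    set L := len a b with hL
    have hv1 := Nat.le_ceil (q * 2 ^ (L + 1))
    have hv2 := Nat.ceil_lt_add_one (show 0 ≤ q * 2 ^ (L + 1) by positivity)
    set v := ⌈q * 2 ^ (L + 1)⌉₊ with hv
    have hpw : (1 / 2 : ℝ) ^ L * 2 ^ (L + 1) = 2 := by
      rw [pow_succ, ← mul_assoc, ← mul_pow]; norm_num
    have hend : ((v : ℝ) + 1) ≤ cumR (f a) (len a) (s + 1) * 2 ^ (L + 1) := by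
      rw [hq, add_mul, hpw]; linarith
    have hvlt : v < 2 ^ (L + 1) := by
      have h2 : (0 : ℝ) < 2 ^ (L + 1) := by positivity
      have : (v : ℝ) + 1 ≤ 2 ^ (L + 1) := by nlinarith
      have h3 : v + 1 ≤ 2 ^ (L + 1) := by exact_mod_cast this
      omega
    obtain ⟨p, hpl, hpv⟩ := exists_val (L + 1) v hvlt
    refine ⟨p, hpl, ?_⟩
    have hok : okc (cum (f a) (len a) s) (cum (f a) (len a) (s + 1)) L p = true := by
      rw [okc_iff, hpl, hpv]
      refine ⟨rfl, ?_, ?_⟩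
      · change q ≤ _
        rw [le_div_iff₀ (by positivity)]; exact hv1
      · change _ ≤ cumR (f a) (len a) (s + 1)
        rw [div_le_iff₀ (by positivity)]; exact hend
    have hdom : (Nat.rfindOpt (G (a, p))).Dom :=
      Nat.rfindOpt_dom.2 ⟨s, b, by simp [G, hs, ← hL, hok]⟩
    obtain ⟨u, hu⟩ := Nat.rfindOpt_spec (Part.get_mem hdom)
    obtain ⟨n2, o2⟩ := hspec _ _ _ _ hu
    obtain rfl := okc_unique _ _ hok o2 List.prefix_rfl
    rw [Option.some.inj (hs.symm.trans n2)]
    exact Part.get_mem hdom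

end kc
end CK

namespace CK

open Encodable Denumerable

section machines

variable {α β γ σ : Type} [Primcodable α] [Primcodable β] [Primcodable γ] [Primcodable σ]

theorem EnumFam.reindex {S : α → Set β} (hS : EnumFam S) {g : σ → α} (hg : Computable g) :
    EnumFam fun x => S (g x) := by
  obtain ⟨f, hf, h⟩ := hS
  exact ⟨fun x s => f (g x) s, hf.comp (hg.comp Computable.fst) Computable.snd, fun x b => h _ _⟩

theorem graph_enum {V : BStr →. BStr} (hV : Partrec V) {test : σ → BStr × BStr → Bool}
    (ht : Computable₂ test) {out : BStr × BStr → β} (ho : Computable out) :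
    EnumFam fun a : σ => {b : β | ∃ p x, x ∈ V p ∧ test a (p, x) = true ∧ out (p, x) = b} := by
  obtain ⟨H, hH, hs⟩ := exists_stage hV
  refine ⟨fun a s => (decode (α := BStr) s.unpair.1).bind fun p => (H p s.unpair.2).bind fun x =>
    bif test a (p, x) then some (out (p, x)) else none, ?_, ?_⟩
  · refine Computable.option_bind ?_ (Computable₂.mk (Computable.option_bind ?_
      (Computable₂.mk (Computable.cond ?_ ?_ (Computable.const _)))))
    · exact Computable.decode.comp (Computable.fst.comp (Computable.unpair.comp Computable.snd))
    · exact hH.comp Computable.snd (Computable.snd.comp (Computable.unpair.comp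
        (Computable.snd.comp Computable.fst)))
    · exact ht.comp (Computable.fst.comp (Computable.fst.comp Computable.fst))
        ((Computable.snd.comp Computable.fst).pair Computable.snd)
    · exact Computable.option_some.comp (ho.comp
        ((Computable.snd.comp Computable.fst).pair Computable.snd))
  · intro a b
    constructor
    · rintro ⟨p, x, hx, h1, h2⟩
      obtain ⟨s, hs⟩ := (hs p x).1 hx
      refine ⟨Nat.pair (encode p) s, ?_⟩
      simp only [Nat.unpair_pair, encodek, Option.bind_some]
      simp [hs, h1, h2]
    · rintro ⟨s, h⟩
      obtain ⟨p, _, h⟩ := Option.bind_eq_some_iff.1 h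
      obtain ⟨x, hx, h⟩ := Option.bind_eq_some_iff.1 h
      refine ⟨p, x, (hs p x).2 ⟨_, hx⟩, ?_⟩
      cases h1 : test a (p, x) with
      | true => simpa [h1] using h
      | false => simp [h1] at h

/-- Strings of length `y.2` with a `V`-program shorter than `y.1`. -/
def SX (V : BStr →. BStr) (y : ℕ × ℕ) : Set BStr :=
  {x | ∃ p, x ∈ V p ∧ p.length < y.1 ∧ x.length = y.2}

/-- Programs of length `y.2.2` for strings of length `y.2.1`. -/
def SP (V : BStr →. BStr) (y : Unit × (ℕ × ℕ)) : Set BStr :=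
  {p | ∃ x, x ∈ V p ∧ p.length = y.2.2 ∧ x.length = y.2.1}

theorem enum_SX {V : BStr →. BStr} (hV : Partrec V) : EnumFam (SX V) := by
  have ht : Computable₂ fun (y : ℕ × ℕ) (z : BStr × BStr) =>
      (decide (z.1.length + 1 ≤ y.1) && decide (z.2.length = y.2)) := by
    refine Computable₂.mk (Computable₂.comp (f := Bool.and) Primrec.and.to_comp ?_ ?_)
    · exact comp_le.comp (Computable.succ.comp (Computable.list_length.comp
        (Computable.fst.comp Computable.snd))) (Computable.fst.comp Computable.fst)
    · exact comp_eq.comp (Computable.list_length.comp (Computable.snd.comp Computable.snd))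
        (Computable.snd.comp Computable.fst)
  obtain ⟨f, hf, h⟩ := graph_enum hV ht (out := fun z : BStr × BStr => z.2) Computable.snd
  refine ⟨f, hf, fun a b => ?_⟩
  rw [← h]
  simp only [SX, Set.mem_setOf_eq, Bool.and_eq_true, decide_eq_true_eq]
  constructor
  · rintro ⟨p, hp, h1, h2⟩
    exact ⟨p, b, hp, ⟨by omega, h2⟩, rfl⟩
  · rintro ⟨p, x, hp, ⟨h1, h2⟩, rfl⟩
    exact ⟨p, hp, by omega, h2⟩

theorem enum_SP {V : BStr →. BStr} (hV : Partrec V) : EnumFam (SP V) := by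
  have ht : Computable₂ fun (y : Unit × (ℕ × ℕ)) (z : BStr × BStr) =>
      (decide (z.1.length = y.2.2) && decide (z.2.length = y.2.1)) := by
    refine Computable₂.mk (Computable₂.comp (f := Bool.and) Primrec.and.to_comp ?_ ?_)
    · exact comp_eq.comp (Computable.list_length.comp (Computable.fst.comp Computable.snd))
        (Computable.snd.comp (Computable.snd.comp Computable.fst))
    · exact comp_eq.comp (Computable.list_length.comp (Computable.snd.comp Computable.snd))
        (Computable.fst.comp (Computable.snd.comp Computable.fst))
  obtain ⟨f, hf, h⟩ := graph_enum hV ht (out := fun z : BStr × BStr => z.1) Computable.fst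
  refine ⟨f, hf, fun a b => ?_⟩
  rw [← h]
  simp only [SP, Set.mem_setOf_eq, Bool.and_eq_true, decide_eq_true_eq]
  constructor
  · rintro ⟨x, hp, h1, h2⟩
    exact ⟨b, x, hp, ⟨h1, h2⟩, rfl⟩
  · rintro ⟨p, x, hp, ⟨h1, h2⟩, rfl⟩
    exact ⟨x, hp, h1, h2⟩

theorem card_len_eq (F : Finset BStr) (l : ℕ) (h : ∀ p ∈ F, p.length = l) : F.card ≤ 2 ^ l := by
  classical
  have : F ⊆ Finset.univ.image fun v : Fin l → Bool => List.ofFn v := by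
    intro p hp
    obtain rfl := h p hp
    exact Finset.mem_image.2 ⟨p.get, Finset.mem_univ _, List.ofFn_get p⟩
  refine (Finset.card_le_card this).trans (Finset.card_image_le.trans ?_)
  simp

theorem card_len_lt (F : Finset BStr) (L : ℕ) (h : ∀ p ∈ F, p.length < L) : F.card ≤ 2 ^ L := by
  classical
  rw [Finset.card_eq_sum_card_fiberwise (f := List.length) (t := Finset.range L)
    (fun p hp => by simpa using h p hp)]
  calc _ ≤ ∑ l ∈ Finset.range L, 2 ^ l := Finset.sum_le_sum fun l _ => card_len_eq _ l (by simp)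
    _ ≤ 2 ^ L := (Nat.geomSum_lt (m := 2) le_rfl (by simp)).le

theorem card_prog_lt (V : BStr →. BStr) (F : Finset BStr) (L : ℕ)
    (h : ∀ x ∈ F, ∃ p, x ∈ V p ∧ p.length < L) : F.card ≤ 2 ^ L := by
  classical
  choose! g hg hl using h
  have hinj : Set.InjOn g F := by
    intro x hx y hy hxy
    have h1 := hg x hx
    rw [hxy] at h1
    exact Part.mem_unique h1 (hg y hy)
  rw [← Finset.card_image_of_injOn hinj]
  refine card_len_lt _ _ fun p hp => ?_
  obtain ⟨x, hx, rfl⟩ := Finset.mem_image.1 hp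
  exact hl x hx

theorem small_big (V : BStr →. BStr) (t l : ℕ) :
    Small {n : ℕ | Big (SX V (l + t, n)) (2 ^ t)} (2 ^ l) := by
  classical
  intro ns hns h
  choose! g hg1 hg2 hg3 using h
  have hdis : ((ns.toFinset : Set ℕ)).PairwiseDisjoint fun n => (g n).toFinset := by
    intro n hn m hm hnm
    rw [Function.onFun, Finset.disjoint_left]
    intro x hx hx'
    simp only [List.coe_toFinset, Set.mem_setOf_eq] at hn hm
    obtain ⟨_, _, _, h1⟩ := hg2 n hn x (by simpa using hx)
    obtain ⟨_, _, _, h2⟩ := hg2 m hm x (by simpa using hx')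
    exact hnm (h1.symm.trans h2)
  have hc := card_prog_lt V (ns.toFinset.biUnion fun n => (g n).toFinset) (l + t) (by
    intro x hx
    simp only [Finset.mem_biUnion, List.mem_toFinset] at hx
    obtain ⟨n, hn, hx⟩ := hx
    obtain ⟨p, h1, h2, _⟩ := hg2 n hn x hx
    exact ⟨p, h1, h2⟩)
  rw [Finset.card_biUnion hdis] at hc
  have h2 : ns.toFinset.card * 2 ^ t ≤ ∑ n ∈ ns.toFinset, (g n).toFinset.card := by
    rw [← smul_eq_mul]
    refine Finset.card_nsmul_le_sum _ _ _ fun n hn => ?_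
    have hn' : n ∈ ns := by simpa using hn
    rw [List.toFinset_card_of_nodup (hg1 n hn')]
    exact hg3 n hn'
  rw [List.toFinset_card_of_nodup hns] at h2
  have h3 := h2.trans hc
  rw [pow_add] at h3
  exact Nat.le_of_mul_le_mul_right h3 (by positivity)

theorem cpx_le {V : BStr →. BStr} {x q : BStr} (h : x ∈ V q) : cpx V x ≤ q.length :=
  Nat.sInf_le ⟨q, rfl, h⟩

theorem cpx_att {V : BStr →. BStr} {x : BStr} (h : ∃ q, x ∈ V q) :
    ∃ q, q.length = cpx V x ∧ x ∈ V q := by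
  obtain ⟨q, hq⟩ := h
  exact Nat.sInf_mem (s := {n | ∃ q : BStr, q.length = n ∧ x ∈ V q}) ⟨_, q, rfl, hq⟩

theorem cpxCond_le {V : BStr → ℕ →. BStr} {x q : BStr} {y : ℕ} (h : x ∈ V q y) :
    cpxCond V x y ≤ q.length :=
  Nat.sInf_le ⟨q, rfl, h⟩

theorem cpxCond_att {V : BStr → ℕ →. BStr} {x : BStr} {y : ℕ} (h : ∃ q, x ∈ V q y) :
    ∃ q, q.length = cpxCond V x y ∧ x ∈ V q y := by
  obtain ⟨q, hq⟩ := h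
  exact Nat.sInf_mem (s := {n | ∃ q : BStr, q.length = n ∧ x ∈ V q y}) ⟨_, q, rfl, hq⟩

theorem PF.map {M : BStr →. β} (h : PF M) (g : BStr → β → γ) : PF fun p => (M p).map (g p) :=
  fun p q hp hq hpq => h p q hp hq hpq

/-- Machines reading a block of prescribed length. -/
theorem exists_block {I : α → ℕ →. β} (hI : Partrec₂ I) {len : α → ℕ} (hlen : Computable len) :
    ∃ M : α → BStr →. β, Partrec₂ M ∧ (∀ a, PF (M a)) ∧
      ∀ a w b, w.length = len a → b ∈ I a (val w) → b ∈ M a w := by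
  let g : α × BStr → Option Unit := fun x => bif decide (x.2.length = len x.1) then some () else none
  have hg : Computable g := Computable.cond (comp_eq.comp
    (Computable.list_length.comp Computable.snd) (hlen.comp Computable.fst))
    (Computable.const _) (Computable.const _)
  refine ⟨fun a w => (g (a, w) : Part Unit).bind fun _ => I a (val w), ?_, ?_, ?_⟩
  · exact (Computable.ofOption hg).bind (Partrec₂.comp hI (Computable.fst.comp Computable.fst)
      (comp_val.comp (Computable.snd.comp Computable.fst)))
  · have key : ∀ a w, ((g (a, w) : Part Unit).bind fun _ => I a (val w)).Dom → w.length = len a := by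
      intro a w h
      by_contra hne
      simp [g, hne] at h
    intro a p q hp hq hpq
    exact hpq.eq_of_length ((key a p hp).trans (key a q hq).symm)
  · intro a w b hw hb
    simpa [g, hw] using hb

theorem plain_count {U : BStr →. BStr} (hU : UniversalPlain U) :
    ∃ c, ∀ n f, Small (SX U (cpxN U n + 2 * f + 1, n)) (2 ^ (3 * (f + c))) := by
  classical
  obtain ⟨I, hI, hIs⟩ := exists_idx (enum_big (enum_SX hU.1))
  obtain ⟨A, hA, hApf, hAs⟩ := exists_unary
  have two : Computable fun _ : (Unit × ℕ) × BStr => 2 := Computable.const 2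
  have three : Computable fun z : (Unit × ℕ) × BStr => 3 * z.1.2 :=
    comp_mul.comp (Computable.const 3) (Computable.snd.comp Computable.fst)
  obtain ⟨D, hD, hDs, -⟩ := exists_comp (δ := Unit) (fun _ => A)
    (fun _ s w => (I (2 ^ (3 * s), w.length + 3 * s) (val w)).map numStr)
    (hA.comp Computable.snd)
    (Partrec.map (Partrec₂.comp hI ((comp_pow.comp two three).pair
      (comp_add.comp (Computable.list_length.comp Computable.snd) three))
      (comp_val.comp Computable.snd)) (comp_numStr.comp Computable.snd).to₂) (fun _ => hApf)
  obtain ⟨c0, hc0⟩ := hU.2 (fun z => D () z) (Partrec₂.comp hD (Computable.const ()) Computable.id)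
  refine ⟨c0 + 2, fun n f l hl hlS => ?_⟩
  by_contra hlt
  set s := f + (c0 + 2) with hs
  have hbig : Big (SX U (cpxN U n + 2 * f + 1, n)) (2 ^ (3 * s)) := ⟨l, hl, hlS, by omega⟩
  have hle : 3 * s ≤ cpxN U n + 2 * f + 1 := by
    have := card_prog_lt U l.toFinset (cpxN U n + 2 * f + 1) (by
      intro x hx
      obtain ⟨p, h1, h2, _⟩ := hlS x (by simpa using hx)
      exact ⟨p, h1, h2⟩)
    rw [List.toFinset_card_of_nodup hl] at this
    exact (Nat.pow_le_pow_iff_right (a := 2) (by omega)).1 (by omega)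
  obtain ⟨e, he⟩ := Nat.exists_eq_add_of_le' hle
  rw [he] at hbig
  obtain ⟨i, hi, hiI⟩ := hIs (2 ^ (3 * s), e + 3 * s) (2 ^ e) n (small_big U (3 * s) e) hbig
  obtain ⟨w, hw, hv⟩ := exists_val e i hi
  have hmem := hDs () (ucode s) w s (numStr n) (hAs s) (by
    rw [hw, hv]; exact Part.mem_map _ hiI)
  obtain ⟨q, hq, hqU⟩ := hc0 _ _ hmem
  have h1 : cpxN U n ≤ q.length := cpx_le hqU
  rw [List.length_append, length_ucode, hw] at hq
  omega

theorem kraft_PF {V : BStr →. β} (hV : PF V) (F : Finset BStr) (h : ∀ p ∈ F, (V p).Dom) :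
    ∑ p ∈ F, (1 / 2 : ℝ) ^ p.length ≤ 1 := by
  by_cases hn : [] ∈ F
  · have : F = {[]} := by
      refine Finset.eq_singleton_iff_unique_mem.2 ⟨hn, fun p hp => ?_⟩
      exact (hV [] p (h _ hn) (h _ hp) List.nil_prefix).symm
    rw [this]; simp
  · have hud : InformationTheory.UniquelyDecodable (F : Set BStr) := by
      intro L₁
      induction L₁ with
      | nil =>
        intro L₂ _ h2 he
        cases L₂ with
        | nil => rfl
        | cons w L =>
          exfalso
          have h3 : w ∈ (F : Set BStr) := h2 w List.mem_cons_self
          simp only [List.flatten_nil, List.flatten_cons] at he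
          have : w = [] := (List.append_eq_nil_iff.1 he.symm).1
          exact hn (this ▸ h3)
      | cons v L ih =>
        intro L₂ h1 h2 he
        have hv : v ∈ (F : Set BStr) := h1 v List.mem_cons_self
        cases L₂ with
        | nil =>
          exfalso
          simp only [List.flatten_nil, List.flatten_cons] at he
          have : v = [] := (List.append_eq_nil_iff.1 he).1
          exact hn (this ▸ hv)
        | cons w L' =>
          have hw : w ∈ (F : Set BStr) := h2 w List.mem_cons_self
          simp only [List.flatten_cons] at he
          have e1 : v <+: w ++ L'.flatten := he ▸ List.prefix_append _ _
          have e2 : w <+: w ++ L'.flatten := List.prefix_append _ _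
          have : v = w := by
            rcases List.prefix_or_prefix_of_prefix e1 e2 with h3 | h3
            · exact hV _ _ (h _ hv) (h _ hw) h3
            · exact (hV _ _ (h _ hw) (h _ hv) h3).symm
          subst this
          rw [ih L' (fun x hx => h1 x (List.mem_cons_of_mem _ hx))
            (fun x hx => h2 x (List.mem_cons_of_mem _ hx)) (List.append_cancel_left he)]
    simpa using InformationTheory.kraft_mcmillan_inequality hud

theorem big_len {V : BStr →. BStr} {n l t : ℕ} (h : Big (SP V ((), (n, l))) (2 ^ t)) : t ≤ l := by
  classical
  obtain ⟨L, hL, hS, hc⟩ := h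
  have := card_len_eq L.toFinset l (by
    intro p hp
    obtain ⟨_, _, h, _⟩ := hS p (by simpa using hp)
    exact h)
  rw [List.toFinset_card_of_nodup hL] at this
  exact (Nat.pow_le_pow_iff_right (a := 2) (by omega)).1 (by omega)

theorem kraft_keys {V : BStr →. BStr} (hV : PF V) (t : ℕ) (F : Finset (ℕ × ℕ))
    (hF : ∀ c ∈ F, Big (SP V ((), c)) (2 ^ t)) : ∑ c ∈ F, (1 / 2 : ℝ) ^ (c.2 - t) ≤ 1 := by
  classical
  have hF' := hF
  choose! g hg1 hg2 hg3 using hF'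
  have hdis : ((F : Set (ℕ × ℕ))).PairwiseDisjoint fun c => (g c).toFinset := by
    intro n hn m hm hnm
    rw [Function.onFun, Finset.disjoint_left]
    intro p hx hx'
    obtain ⟨x, h1, h2, h3⟩ := hg2 n hn p (by simpa using hx)
    obtain ⟨y, h1', h2', h3'⟩ := hg2 m hm p (by simpa using hx')
    obtain rfl := Part.mem_unique h1 h1'
    exact hnm (Prod.ext (h3.symm.trans h3') (h2.symm.trans h2'))
  have hk := kraft_PF hV (F.biUnion fun c => (g c).toFinset) (by
    intro p hp
    simp only [Finset.mem_biUnion, List.mem_toFinset] at hp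
    obtain ⟨c, hc, hp⟩ := hp
    obtain ⟨x, h1, _⟩ := hg2 c hc p hp
    exact Part.dom_iff_mem.2 ⟨x, h1⟩)
  rw [Finset.sum_biUnion hdis] at hk
  refine le_trans (Finset.sum_le_sum fun c hc => ?_) hk
  have hl : t ≤ c.2 := big_len (n := c.1) (l := c.2) (hF c hc)
  have e1 : ∑ p ∈ (g c).toFinset, (1 / 2 : ℝ) ^ p.length = (g c).length * (1 / 2 : ℝ) ^ c.2 := by
    rw [Finset.sum_congr rfl (g := fun _ => (1 / 2 : ℝ) ^ c.2), Finset.sum_const, nsmul_eq_mul,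
      List.toFinset_card_of_nodup (hg1 c hc)]
    intro p hp
    obtain ⟨_, _, h2, _⟩ := hg2 c hc p (by simpa using hp)
    rw [h2]
  rw [e1]
  obtain ⟨m, hm⟩ := Nat.exists_eq_add_of_le hl
  have h4 : (2 : ℝ) ^ t ≤ (g c).length := by exact_mod_cast hg3 c hc
  rw [hm, Nat.add_sub_cancel_left, pow_add, ← mul_assoc]
  have h5 : (1 : ℝ) ≤ (g c).length * (1 / 2) ^ t := by
    calc (1 : ℝ) = 2 ^ t * (1 / 2) ^ t := by rw [← mul_pow]; norm_num
      _ ≤ _ := by gcongr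
  nlinarith [show (0 : ℝ) < (1 / 2) ^ m by positivity]

theorem pb1 {UK : BStr →. BStr} (hUK : UniversalPrefixFree UK) :
   EnumFam fun t : ℕ => {c : ℕ × ℕ | Big (SP UK ((), c)) (2 ^ (2 * t))} := by
  have hpow : Computable fun t : ℕ => ((2 ^ (2 * t), ()) : ℕ × Unit) :=
    (comp_pow.comp (Computable.const 2) (comp_mul.comp (Computable.const 2) Computable.id)).pair
      (Computable.const ())
  exact (enum_big (enum_SP hUK.1)).reindex hpow
theorem pb2 : Computable₂ fun (t : ℕ) (c : ℕ × ℕ) => c.2 - 2 * t :=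
    comp_sub.comp (Computable.snd.comp Computable.snd)
      (comp_mul.comp (Computable.const 2) Computable.fst)
theorem pb3 {UK : BStr →. BStr} (hUK : UniversalPrefixFree UK) :
    ∃ M : ℕ → BStr →. ℕ × ℕ, Partrec₂ M ∧ (∀ a, PF (M a)) ∧ ∀ t n l,
      Big (SP UK ((), (n, l))) (2 ^ (2 * t)) → ∃ p, p.length = l - 2 * t + 1 ∧ (n, l) ∈ M t p := by
  obtain ⟨M, hM, hMpf, hMs⟩ := exists_kc (pb1 hUK) pb2
  exact ⟨M, hM, hMpf, fun t n l hb => hMs t (n, l) hb fun F hF => kraft_keys hUK.2.1 (2 * t) F hF⟩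

theorem partrec_map {α β σ : Type} [Primcodable α] [Primcodable β] [Primcodable σ]
    {f : α →. β} (hf : Partrec f) {g : β → σ} (hg : Computable g) :
    Partrec fun a => (f a).map g := hf.map (hg.comp Computable.snd).to₂

theorem prefix_big {UK : BStr →. BStr} (hUK : UniversalPrefixFree UK) :
    ∃ c, ∀ n l t, Big (SP UK ((), (n, l))) (2 ^ (2 * t)) → cpxN UK n + t ≤ l + c := by
  obtain ⟨M, hM, hMpf, hMs⟩ := pb3 hUK
  obtain ⟨A, hA, hApf, hAs⟩ := exists_unary
  have hg : Computable fun w : ℕ × ℕ => numStr w.1 :=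
    comp_numStr.comp Computable.fst
  have hM' : Partrec fun z : (Unit × ℕ) × BStr => M z.1.2 z.2 :=
    Partrec₂.comp hM (Computable.snd.comp Computable.fst) Computable.snd
  have hB : Partrec fun z : (Unit × ℕ) × BStr => (M z.1.2 z.2).map fun c => numStr c.1 :=
    partrec_map hM' hg
  obtain ⟨D, hD, hDs, hDpf⟩ := exists_comp (δ := Unit) (fun _ => A)
    (fun _ t w => (M t w).map fun c => numStr c.1)
    (hA.comp Computable.snd)
    hB (fun _ => hApf)
  obtain ⟨c0, hc0⟩ := hUK.2.2 (fun z => D () z)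
    (Partrec₂.comp hD (Computable.const ()) Computable.id)
    (hDpf (fun _ t => (hMpf t).map fun _ c => numStr c.1) ())
  refine ⟨c0 + 2, fun n l t hbig => ?_⟩
  obtain ⟨p, hp, hpM⟩ := hMs t n l hbig
  have hmem := hDs () (ucode t) p t (numStr n) (hAs t) (Part.mem_map (fun c : ℕ × ℕ => numStr c.1) hpM)
  obtain ⟨q, hq, hqU⟩ := hc0 _ _ hmem
  have h1 : cpxN UK n ≤ q.length := cpx_le hqU
  have h2 := big_len hbig
  rw [List.length_append, length_ucode, hp] at hq
  clear hbig hc0 hMs hmem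
  omega

theorem prefix_count {UK : BStr →. BStr} (hUK : UniversalPrefixFree UK)
    (hlenK : ∀ x : BStr, cpxN UK x.length ≤ cpx UK x) (d : ℕ) :
    ∃ B, ∀ n, Small (SX UK (cpxN UK n + d + 1, n)) B := by
  classical
  obtain ⟨c, hc⟩ := prefix_big hUK
  refine ⟨2 ^ (2 * (d + c + 1)) * (d + 1), fun n L hL hS => ?_⟩
  choose! g hg1 hg2 hg3 using hS
  have hinj : Set.InjOn g (L.toFinset : Set BStr) := by
    intro x hx y hy hxy
    have h1 := hg1 x (by simpa using hx)
    rw [hxy] at h1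
    exact Part.mem_unique h1 (hg1 y (by simpa using hy))
  rw [← List.toFinset_card_of_nodup hL]
  have := Finset.card_le_mul_card_image_of_maps_to (s := L.toFinset)
    (t := Finset.Icc (cpxN UK n) (cpxN UK n + d)) (f := fun x => (g x).length)
    (fun x hx => by
      have hx' : x ∈ L := by simpa using hx
      have h1 := cpx_le (hg1 x hx')
      have h2 := hlenK x
      have h3 := hg2 x hx'
      have h4 := hg3 x hx'
      simp only at h3 h4
      rw [h4] at h2
      rw [Finset.mem_Icc]
      omega) (2 ^ (2 * (d + c + 1))) (fun l hl => by
      by_contra hgt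
      have hb : Big (SP UK ((), (n, l))) (2 ^ (2 * (d + c + 1))) := by
        refine ⟨((L.toFinset.filter fun x => (g x).length = l).image g).toList,
          Finset.nodup_toList _, ?_, ?_⟩
        · intro p hp
          simp only [Finset.mem_toList, Finset.mem_image, Finset.mem_filter, List.mem_toFinset] at hp
          obtain ⟨x, ⟨hx, hxl⟩, rfl⟩ := hp
          exact ⟨x, hg1 x hx, hxl, hg3 x hx⟩
        · rw [Finset.length_toList, Finset.card_image_of_injOn (hinj.mono (by
            intro x hx
            simp only [Finset.coe_filter, List.mem_toFinset, Set.mem_ofPred_eq] at hx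
            simpa using hx.1))]
          omega
      have := hc n l _ hb
      rw [Finset.mem_Icc] at hl
      omega)
  refine this.trans (le_of_eq ?_)
  rw [Nat.card_Icc]
  congr 1
  omega

end machines
end CK

namespace CK

section final

theorem exists_all : ∃ A : BStr →. BStr, Partrec A ∧ PF A ∧ ∀ x : BStr, ∃ p, x ∈ A p := by
  obtain ⟨A, hA, hApf, hAs⟩ := exists_unary
  have hd : Computable fun f : ℕ => ((Encodable.decode (α := BStr) f).getD [] : BStr) :=
    Computable.option_getD Computable.decode (Computable.const [])
  refine ⟨fun p => (A p).map fun f => ((Encodable.decode (α := BStr) f).getD [] : BStr),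
    partrec_map hA hd, hApf.map fun _ f => ((Encodable.decode (α := BStr) f).getD [] : BStr), ?_⟩
  intro x
  refine ⟨ucode (Encodable.encode x), ?_⟩
  have := Part.mem_map (fun f : ℕ => ((Encodable.decode (α := BStr) f).getD [] : BStr))
    (hAs (Encodable.encode x))
  simpa using this

theorem plain_att {U : BStr →. BStr} (hU : UniversalPlain U) (x : BStr) :
    ∃ q, q.length = cpx U x ∧ x ∈ U q := by
  obtain ⟨A, hA, -, hAs⟩ := exists_all
  obtain ⟨c, hc⟩ := hU.2 A hA
  obtain ⟨p, hp⟩ := hAs x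
  obtain ⟨q, -, hq⟩ := hc p x hp
  exact cpx_att ⟨q, hq⟩

theorem prefix_att {U : BStr →. BStr} (hU : UniversalPrefixFree U) (x : BStr) :
    ∃ q, q.length = cpx U x ∧ x ∈ U q := by
  obtain ⟨A, hA, hApf, hAs⟩ := exists_all
  obtain ⟨c, hc⟩ := hU.2.2 A hA hApf
  obtain ⟨p, hp⟩ := hAs x
  obtain ⟨q, -, hq⟩ := hc p x hp
  exact cpx_att ⟨q, hq⟩

theorem cond_att {U : BStr → ℕ →. BStr} (hU : UniversalPrefixFreeCond U) (x : BStr) (y : ℕ) :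
    ∃ q, q.length = cpxCond U x y ∧ x ∈ U q y := by
  obtain ⟨A, hA, hApf, hAs⟩ := exists_all
  obtain ⟨c, hc⟩ := hU.2.2 (fun p _ => A p) (hA.comp Computable.fst) (fun _ => hApf)
  obtain ⟨p, hp⟩ := hAs x
  obtain ⟨q, -, hq⟩ := hc p y x hp
  exact cpxCond_att ⟨q, hq⟩

theorem plain_small {U : BStr →. BStr} (hU : UniversalPlain U) :
    ∃ n0, ∀ n, n0 ≤ n → cpxN U n < n := by
  have hM : Partrec fun w : BStr => Part.some (numStr (val w)) :=
    (Computable.comp comp_numStr comp_val).partrec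
  obtain ⟨c, hc⟩ := hU.2 _ hM
  refine ⟨2 * c + 4, fun n hn => ?_⟩
  have h1 : n < 2 ^ (n / 2 + 1) := by
    have := Nat.lt_two_pow_self (n := n / 2)
    rw [pow_succ]
    omega
  obtain ⟨w, hw, hv⟩ := exists_val _ n h1
  obtain ⟨q, hq, hqU⟩ := hc w (numStr n) (by rw [hv]; exact Part.mem_some _)
  have : cpxN U n ≤ q.length := cpx_le hqU
  omega

/-- The string `0^k 1 0^(n-k-1)`. -/
def markStr (k n : ℕ) : BStr := numStr k ++ true :: numStr (n - k - 1)

theorem length_markStr {k n : ℕ} (h : k < n) : (markStr k n).length = n := by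
  simp [markStr, numStr]
  omega

theorem findIdx_markStr (k n : ℕ) : (markStr k n).findIdx id = k := by
  unfold markStr numStr
  induction k generalizing n with
  | zero => simp [List.findIdx_cons]
  | succ k ih =>
    have := ih (n - 1)
    rw [show n - 1 - k - 1 = n - (k + 1) - 1 by omega] at this
    rw [List.replicate_succ, List.cons_append, List.findIdx_cons, this]
    rfl

theorem comp_markStr : Computable₂ markStr := by
  refine Computable₂.mk ?_
  have h1 : Computable fun z : ℕ × ℕ => numStr z.1 := comp_numStr.comp Computable.fst
  have h2 : Computable fun z : ℕ × ℕ => numStr (z.2 - z.1 - 1) :=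
    comp_numStr.comp (comp_sub.comp (comp_sub.comp Computable.snd Computable.fst)
      (Computable.const 1))
  exact Computable.list_append.comp h1 (Computable.list_cons.comp (Computable.const true) h2)

theorem mark_cpx {U : BStr →. BStr} (hU : UniversalPlain U) :
    ∃ c, ∀ n, cpx U (markStr (cpxN U n) n) ≤ cpxN U n + c := by
  have hg : Computable₂ fun (p y : BStr) => markStr p.length y.length :=
    comp_markStr.comp (Computable.list_length.comp Computable.fst)
      (Computable.list_length.comp Computable.snd)
  have hM : Partrec fun p : BStr => (U p).map fun y => markStr p.length y.length :=
    Partrec.map hU.1 hg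
  obtain ⟨c, hc⟩ := hU.2 _ hM
  refine ⟨c, fun n => ?_⟩
  obtain ⟨p, hp, hpU⟩ := plain_att hU (numStr n)
  have := Part.mem_map (fun y => markStr p.length y.length) hpU
  obtain ⟨q, hq, hqU⟩ := hc p _ this
  rw [hp, show (numStr n).length = n by simp [numStr]] at hqU
  have := cpx_le hqU
  rw [hp] at hq
  exact this.trans hq

theorem comp_firstOne : Computable fun x : BStr => numStr (x.findIdx id) := by
  refine comp_numStr.comp (Primrec.to_comp ?_)
  exact Primrec.list_findIdx (p := fun _ b => b) Primrec.id Primrec.snd.to₂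

theorem b_to_c_machine {UK : BStr →. BStr} (hUK : UniversalPrefixFree UK)
    (hlenK : ∀ x : BStr, cpxN UK x.length ≤ cpx UK x)
    {UKc : BStr → ℕ →. BStr} (hUKc : UniversalPrefixFreeCond UKc) (d : ℕ) :
    ∃ e, ∀ x : BStr, cpx UK x ≤ cpxN UK x.length + d →
      cpxCond UKc (numStr (x.findIdx id)) (Nat.pair x.length (cpxN UK x.length)) ≤ e := by
  classical
  obtain ⟨B, hB⟩ := prefix_count hUK hlenK d
  obtain ⟨I, hI, hIs⟩ := exists_idx (enum_SX hUK.1)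
  have hk : Computable fun z : ℕ × ℕ => ((z.1.unpair.2 + d + 1, z.1.unpair.1) : ℕ × ℕ) := by
    have hu : Computable fun z : ℕ × ℕ => z.1.unpair := Computable.unpair.comp Computable.fst
    exact (comp_add.comp (comp_add.comp (Computable.snd.comp hu) (Computable.const d))
      (Computable.const 1)).pair (Computable.fst.comp hu)
  have hI' : Partrec fun z : ℕ × ℕ => I (z.1.unpair.2 + d + 1, z.1.unpair.1) z.2 :=
    Partrec₂.comp hI hk Computable.snd
  have hJ : Partrec₂ fun (y i : ℕ) => (I (y.unpair.2 + d + 1, y.unpair.1) i).map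
      fun x => numStr (x.findIdx id) := partrec_map hI' comp_firstOne
  obtain ⟨M, hM, hMpf, hMs⟩ := exists_block hJ (len := fun _ => B) (Computable.const B)
  obtain ⟨c, hc⟩ := hUKc.2.2 (fun p y => M y p)
    (Partrec₂.comp hM Computable.snd Computable.fst) (fun y => hMpf y)
  refine ⟨B + c, fun x hx => ?_⟩
  obtain ⟨p, hp, hpU⟩ := prefix_att hUK x
  have hmem : x ∈ SX UK (cpxN UK x.length + d + 1, x.length) :=
    ⟨p, hpU, by show p.length < cpxN UK x.length + d + 1; omega, rfl⟩
  obtain ⟨i, hi, hiI⟩ := hIs _ _ _ (hB x.length) hmem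
  obtain ⟨w, hw, hv⟩ := exists_val B i (hi.trans Nat.lt_two_pow_self)
  have h1 := hMs (Nat.pair x.length (cpxN UK x.length)) w (numStr (x.findIdx id)) hw (by
    rw [hv, Nat.unpair_pair]
    exact Part.mem_map (fun x : BStr => numStr (x.findIdx id)) hiI)
  obtain ⟨q, hq, hqU⟩ := hc w _ _ h1
  have := cpxCond_le hqU
  omega

theorem b_to_c {U UK : BStr →. BStr} (hU : UniversalPlain U) (hUK : UniversalPrefixFree UK)
    (hlenK : ∀ x : BStr, cpxN UK x.length ≤ cpx UK x)
    {UKc : BStr → ℕ →. BStr} (hUKc : UniversalPrefixFreeCond UKc)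
    (hb : ∀ c' : ℤ, ∃ d' : ℤ, ∀ (n : ℕ) (x : BStr), x.length = n →
        (cpx U x : ℤ) - (cpxN U n : ℤ) ≤ c' → (cpx UK x : ℤ) - (cpxN UK n : ℤ) ≤ d') :
    ∃ c'' : ℕ, ∀ n : ℕ,
        cpxCond UKc (numStr (cpxN U n)) (Nat.pair n (cpxN UK n)) ≤ c'' := by
  obtain ⟨n0, hn0⟩ := plain_small hU
  obtain ⟨c, hc⟩ := mark_cpx hU
  obtain ⟨d, hd⟩ := hb c
  obtain ⟨e, he⟩ := b_to_c_machine hUK hlenK hUKc d.toNat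
  refine ⟨e + ∑ n ∈ Finset.range n0,
    cpxCond UKc (numStr (cpxN U n)) (Nat.pair n (cpxN UK n)), fun n => ?_⟩
  by_cases hn : n0 ≤ n
  · have hl := length_markStr (hn0 n hn)
    have h1 := hd n _ hl (by have := hc n; omega)
    have h2 := he (markStr (cpxN U n) n) (by rw [hl]; omega)
    rw [hl, findIdx_markStr] at h2
    omega
  · have := Finset.single_le_sum (s := Finset.range n0)
      (f := fun n => cpxCond UKc (numStr (cpxN U n)) (Nat.pair n (cpxN UK n)))
      (fun _ _ => Nat.zero_le _) (Finset.mem_range.2 (not_le.1 hn))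
    omega

theorem stage3 {U : BStr →. BStr} (hU : UniversalPlain U) :
    ∃ (c : ℕ) (D : ℕ × ℕ → BStr →. BStr), Partrec₂ D ∧ (∀ a, PF (D a)) ∧
      ∀ n f x, x ∈ SX U (cpxN U n + 2 * f + 1, n) →
        ∃ w, w.length = 4 * f + c ∧ x ∈ D (n, cpxN U n) w := by
  classical
  obtain ⟨c, hc⟩ := plain_count hU
  obtain ⟨I, hI, hIs⟩ := exists_idx (enum_SX hU.1)
  have hk : Computable fun z : ((ℕ × ℕ) × ℕ) × ℕ =>
      ((z.1.1.2 + 2 * z.1.2 + 1, z.1.1.1) : ℕ × ℕ) := by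
    have h1 : Computable fun z : ((ℕ × ℕ) × ℕ) × ℕ => z.1.1 := Computable.fst.comp Computable.fst
    have h2 : Computable fun z : ((ℕ × ℕ) × ℕ) × ℕ => z.1.2 := Computable.snd.comp Computable.fst
    exact (comp_add.comp (comp_add.comp (Computable.snd.comp h1)
      (comp_mul.comp (Computable.const 2) h2)) (Computable.const 1)).pair (Computable.fst.comp h1)
  have hJ : Partrec₂ fun (a : (ℕ × ℕ) × ℕ) (i : ℕ) => I (a.1.2 + 2 * a.2 + 1, a.1.1) i :=
    Partrec₂.comp hI hk Computable.snd
  have hlen : Computable fun a : (ℕ × ℕ) × ℕ => 3 * (a.2 + c) :=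
    comp_mul.comp (Computable.const 3) (comp_add.comp Computable.snd (Computable.const c))
  obtain ⟨M, hM, hMpf, hMs⟩ := exists_block hJ hlen
  obtain ⟨A, hA, hApf, hAs⟩ := exists_unary
  have hB : Partrec fun z : ((ℕ × ℕ) × ℕ) × BStr => M (z.1.1, z.1.2) z.2 :=
    Partrec₂.comp hM ((Computable.fst.comp Computable.fst).pair
      (Computable.snd.comp Computable.fst)) Computable.snd
  obtain ⟨D, hD, hDs, hDpf⟩ := exists_comp (δ := ℕ × ℕ) (fun _ => A) (fun d f w => M (d, f) w)
    (hA.comp Computable.snd) hB (fun _ => hApf)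
  refine ⟨3 * c + 1, D, hD, hDpf fun d f => hMpf (d, f), fun n f x hx => ?_⟩
  obtain ⟨i, hi, hiI⟩ := hIs _ _ _ (hc n f) hx
  obtain ⟨w, hw, hv⟩ := exists_val _ i hi
  refine ⟨ucode f ++ w, ?_, hDs _ _ _ _ _ (hAs f) (hMs _ w x hw ?_)⟩
  · rw [List.length_append, length_ucode, hw]
    ring
  · rw [hv]
    exact hiI

theorem stage2 {D3 : ℕ × ℕ → BStr →. BStr} (hD3 : Partrec₂ D3) (hpf : ∀ a, PF (D3 a))
    {UKc : BStr → ℕ →. BStr} (hUKc : UniversalPrefixFreeCond UKc) :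
    ∃ D : ℕ × ℕ → BStr →. BStr, Partrec₂ D ∧ (∀ a, PF (D a)) ∧
      ∀ n k0 k q w x, numStr k ∈ UKc q (Nat.pair n k0) → x ∈ D3 (n, k) w →
        x ∈ D (n, k0) (q ++ w) := by
  have hA0 : Partrec fun z : (ℕ × ℕ) × BStr => UKc z.2 (Nat.pair z.1.1 z.1.2) :=
    Partrec₂.comp hUKc.1 Computable.snd (Computable₂.comp (f := Nat.pair) Primrec₂.natPair.to_comp
      (Computable.fst.comp Computable.fst) (Computable.snd.comp Computable.fst))
  have hA : Partrec fun z : (ℕ × ℕ) × BStr => (UKc z.2 (Nat.pair z.1.1 z.1.2)).map List.length :=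
    partrec_map hA0 Computable.list_length
  have hB : Partrec fun z : ((ℕ × ℕ) × ℕ) × BStr => D3 (z.1.1.1, z.1.2) z.2 :=
    Partrec₂.comp hD3 ((Computable.fst.comp (Computable.fst.comp Computable.fst)).pair
      (Computable.snd.comp Computable.fst)) Computable.snd
  obtain ⟨D, hD, hDs, hDpf⟩ := exists_comp (δ := ℕ × ℕ) (α := ℕ)
    (fun d q => (UKc q (Nat.pair d.1 d.2)).map List.length) (fun d k w => D3 (d.1, k) w) hA hB
    (fun d => PF.map (M := fun q => UKc q (Nat.pair d.1 d.2)) (hUKc.2.1 _)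
      fun _ => List.length)
  refine ⟨D, hD, hDpf fun d k => hpf _, fun n k0 k q w x hq hx => hDs (n, k0) q w k x ?_ hx⟩
  have := Part.mem_map List.length hq
  simpa [numStr] using this

theorem stage1 {D2 : ℕ × ℕ → BStr →. BStr} (hD2 : Partrec₂ D2) (hpf : ∀ a, PF (D2 a))
    {UK : BStr →. BStr} (hUK : UniversalPrefixFree UK) :
    ∃ D : BStr →. BStr, Partrec D ∧ PF D ∧
      ∀ n p w x, numStr n ∈ UK p → x ∈ D2 (n, p.length) w → x ∈ D (p ++ w) := by
  have hg : Computable₂ fun (p y : BStr) => ((y.length, p.length) : ℕ × ℕ) :=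
    (Computable.list_length.comp Computable.snd).pair (Computable.list_length.comp Computable.fst)
  have hA : Partrec fun p : BStr => (UK p).map fun y => ((y.length, p.length) : ℕ × ℕ) :=
    Partrec.map hUK.1 hg
  have hB : Partrec fun z : (Unit × (ℕ × ℕ)) × BStr => D2 z.1.2 z.2 :=
    Partrec₂.comp hD2 (Computable.snd.comp Computable.fst) Computable.snd
  obtain ⟨D, hD, hDs, hDpf⟩ := exists_comp (δ := Unit) (α := ℕ × ℕ)
    (fun _ p => (UK p).map fun y => ((y.length, p.length) : ℕ × ℕ)) (fun _ a w => D2 a w)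
    (hA.comp Computable.snd) hB
    (fun d => PF.map (M := UK) hUK.2.1 fun p y => ((y.length, p.length) : ℕ × ℕ))
  refine ⟨D (), Partrec₂.comp hD (Computable.const ()) Computable.id, hDpf (fun _ a => hpf a) (),
    fun n p w x hp hx => hDs () p w (n, p.length) x ?_ hx⟩
  have := Part.mem_map (fun y : BStr => ((y.length, p.length) : ℕ × ℕ)) hp
  simpa [numStr] using this

theorem c_to_a {U UK : BStr →. BStr} (hU : UniversalPlain U) (hUK : UniversalPrefixFree UK)
    (hlenC : ∀ x : BStr, cpxN U x.length ≤ cpx U x)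
    {UKc : BStr → ℕ →. BStr} (hUKc : UniversalPrefixFreeCond UKc)
    (hc : ∃ c'' : ℕ, ∀ n : ℕ,
        cpxCond UKc (numStr (cpxN U n)) (Nat.pair n (cpxN UK n)) ≤ c'') :
    ∃ c : ℤ, ∀ (n : ℕ) (x : BStr), x.length = n →
        (cpx UK x : ℤ) - (cpxN UK n : ℤ) ≤ 2 * ((cpx U x : ℤ) - (cpxN U n : ℤ)) + c := by
  obtain ⟨c2, hc2⟩ := hc
  obtain ⟨c3, D3, hD3, hD3pf, hD3s⟩ := stage3 hU
  obtain ⟨D2, hD2, hD2pf, hD2s⟩ := stage2 hD3 hD3pf hUKc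
  obtain ⟨D1, hD1, hD1pf, hD1s⟩ := stage1 hD2 hD2pf hUK
  obtain ⟨c1, hc1⟩ := hUK.2.2 D1 hD1 hD1pf
  refine ⟨c1 + c2 + c3 + 4, fun n x hx => ?_⟩
  have h0 : cpxN U n ≤ cpx U x := hx ▸ hlenC x
  obtain ⟨p0, hp0, hp0U⟩ := plain_att hU x
  obtain ⟨f, hf1, hf2⟩ : ∃ f, cpx U x ≤ cpxN U n + 2 * f ∧ cpxN U n + 2 * f ≤ cpx U x + 1 :=
    ⟨(cpx U x - cpxN U n + 1) / 2, by omega, by omega⟩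
  obtain ⟨w, hw, hwD⟩ := hD3s n f x
    ⟨p0, hp0U, by show p0.length < cpxN U n + 2 * f + 1; omega, hx⟩
  obtain ⟨p, hp, hpU⟩ := prefix_att hUK (numStr n)
  obtain ⟨q, hq, hqU⟩ := cond_att hUKc (numStr (cpxN U n)) (Nat.pair n p.length)
  have h2 := hD1s n p _ x hpU (hD2s n p.length _ q w x hqU hwD)
  obtain ⟨r, hr, hrU⟩ := hc1 _ _ h2
  have h3 := cpx_le hrU
  have h4 := hc2 n
  rw [hp] at hq
  change q.length = cpxCond UKc (numStr (cpxN U n)) (Nat.pair n (cpxN UK n)) at hq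
  change p.length = cpxN UK n at hp
  rw [List.length_append, List.length_append] at hr
  omega

end final
end CK

/-- the following are equivalent:
(a) `∃ c ∀ n ∀ x, |x| = n → K(x) - K(n) ≤ 2(C(x) - C(n)) + c`;
(b) `∀ c' ∃ d' ∀ n ∀ x, |x| = n → (C(x) - C(n) ≤ c' → K(x) - K(n) ≤ d')`;
(c) `∃ c'' ∀ n, K(C(n) ∣ n, K(n)) ≤ c''`. -/
theorem CK_conditions_equivalent
    (U UK : BStr →. BStr) (hU : UniversalPlain U) (hUK : UniversalPrefixFree UK)
    (hlenC : ∀ x : BStr, cpxN U x.length ≤ cpx U x)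
    (hlenK : ∀ x : BStr, cpxN UK x.length ≤ cpx UK x)
    (UKc : BStr → ℕ →. BStr) (hUKc : UniversalPrefixFreeCond UKc) :
    ((∃ c : ℤ, ∀ (n : ℕ) (x : BStr), x.length = n →
        (cpx UK x : ℤ) - (cpxN UK n : ℤ) ≤ 2 * ((cpx U x : ℤ) - (cpxN U n : ℤ)) + c) ↔
      (∀ c' : ℤ, ∃ d' : ℤ, ∀ (n : ℕ) (x : BStr), x.length = n →
        (cpx U x : ℤ) - (cpxN U n : ℤ) ≤ c' → (cpx UK x : ℤ) - (cpxN UK n : ℤ) ≤ d')) ∧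
    ((∀ c' : ℤ, ∃ d' : ℤ, ∀ (n : ℕ) (x : BStr), x.length = n →
        (cpx U x : ℤ) - (cpxN U n : ℤ) ≤ c' → (cpx UK x : ℤ) - (cpxN UK n : ℤ) ≤ d') ↔
      (∃ c'' : ℕ, ∀ n : ℕ,
        cpxCond UKc (numStr (cpxN U n)) (Nat.pair n (cpxN UK n)) ≤ c'')) := by
  have hba : ∀ {P Q R : Prop}, (P → Q) → (Q → R) → (R → P) → (P ↔ Q) ∧ (Q ↔ R) := by
    intro P Q R h1 h2 h3
    exact ⟨⟨h1, fun h => h3 (h2 h)⟩, ⟨h2, fun h => h1 (h3 h)⟩⟩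
  refine hba ?_ (CK.b_to_c hU hUK hlenK hUKc) (CK.c_to_a hU hUK hlenC hUKc)
  rintro ⟨c, hc⟩ c'
  refine ⟨2 * c' + c, fun n x hx h => ?_⟩
  have := hc n x hx
  omega
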